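/- Let d ≥ 3 and consider simple random walk on Z^d with Green function bounds g(x,y) ≤ C_g(‖x−y‖+1)^{2−d}. Fix L_0 ≥ 1, L_k = L_0 l^k, and an embedding 𝒯 ∈ Λ_n of the dyadic tree. For x' ∈ 𝒯(T_{(n)}) let C_{x'} = ∂_int B(x', L_0) and set C_𝒯 = ∪_{x'} C_{x'}, D_𝒯 = ∪_{x'} ∂_int B(x', L_1/4). Then there is a constant C(d) such that for all l ≥ C(d), sup_{y ∈ D_𝒯} P_y[H_{C_𝒯} < ∞] ≤ 1/(2e). -/

import Mathlib

open MeasureTheory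
open scoped ENNReal

/-- ℓ∞ norm on `ℤ^d`. -/
def linf {d : ℕ} (x : Fin d → ℤ) : ℕ := Finset.univ.sup fun i => (x i).natAbs

/-- ℓ¹ norm on `ℤ^d`. -/
def lone {d : ℕ} (x : Fin d → ℤ) : ℕ := ∑ i, (x i).natAbs

/-- `P` is the family of laws (on path space) of the simple random walk on `ℤ^d`. -/
def IsSRW {d : ℕ} (P : (Fin d → ℤ) → Measure (ℕ → Fin d → ℤ)) : Prop :=
  (∀ x, IsProbabilityMeasure (P x)) ∧
  ∀ (x : Fin d → ℤ) (n : ℕ) (ρ : ℕ → Fin d → ℤ),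
    P x {w | ∀ i ≤ n, w i = ρ i} =
      if ρ 0 = x ∧ ∀ i < n, lone (ρ (i + 1) - ρ i) = 1 then ((2 * d : ℝ≥0∞))⁻¹ ^ n else 0

/-- The ℓ∞ ball of radius `r` around `x`. -/
def ballZ {d : ℕ} (x : Fin d → ℤ) (r : ℕ) : Set (Fin d → ℤ) := {y | linf (y - x) ≤ r}

/-- Interior boundary of a set in `ℤ^d`. -/
def intBdry {d : ℕ} (A : Set (Fin d → ℤ)) : Set (Fin d → ℤ) :=
  {y ∈ A | ∃ y', lone (y' - y) = 1 ∧ y' ∉ A}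

/-- Vertices of the dyadic tree of depth `n`. -/
def TreeVert (n : ℕ) := {l : List (Fin 2) // l.length ≤ n}

/-- The set `Λ_n` of dyadic-tree embeddings at scales `L_j = L₀ l^j`. -/
def Lam (d n L₀ l : ℕ) : Set (TreeVert n → (Fin d → ℤ)) :=
  {T | T ⟨[], by simp⟩ = 0 ∧
    (∀ m : TreeVert n, ∀ i : Fin d,
      ((L₀ * l ^ (n - m.1.length) : ℕ) : ℤ) ∣ T m i) ∧
    ∀ (m : TreeVert n) (hm : m.1.length < n) (i : Fin 2),
      linf (T ⟨m.1 ++ [i], by simpa using hm⟩ - T m)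
        = (i.1 + 1) * (L₀ * l ^ (n - m.1.length))}

/-!
The function `x ↦ (|x|² + 10000)^(-1/4)` is superharmonic on `ℤ^d` for `d ≥ 3`, so by optional
stopping the walk from `y` hits a ball of radius `r` around `c` with probability at most
`K (r / ‖y - c‖)^(1/2)`. This is far from the sharp exponent `d - 2` of the Green function, but it
suffices: around the leaf close to `y` there are at most `2^k` leaves at distance of order
`L_(k+1)`, and `∑ 2^k l^(-(k+1)/2)` is of order `l^(-1/2)`.
-/

/-! ### Norms on `ℤ^d` -/

section Norms

variable {d : ℕ}

lemma natCast_linf (x : Fin d → ℤ) : (linf x : ℝ) = ‖x‖ := by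
  rw [linf, Pi.norm_def, ← NNReal.coe_natCast,
    Finset.apply_sup_eq_sup_comp_of_linearOrder _ Nat.mono_cast Nat.cast_zero]
  simp only [Function.comp_def, NNReal.natCast_natAbs]

lemma mem_ballZ_iff {x y : Fin d → ℤ} {r : ℕ} : y ∈ ballZ x r ↔ ‖y - x‖ ≤ r := by
  rw [← natCast_linf, Nat.cast_le]
  rfl

/-- The step of the walk in direction `s.1` with sign `s.2`. -/
def unitStep (s : Fin d × ℤˣ) : Fin d → ℤ := Pi.single s.1 (s.2 : ℤ)

lemma exists_unitStep_of_lone_eq_one {v : Fin d → ℤ} (h : lone v = 1) : ∃ s, v = unitStep s := by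
  obtain ⟨i, -, hi⟩ := Finset.exists_ne_zero_of_sum_ne_zero (h.trans_ne one_ne_zero)
  rw [lone, ← Finset.add_sum_erase _ _ (Finset.mem_univ i)] at h
  have h_off : ∑ j ∈ Finset.univ.erase i, (v j).natAbs = 0 := by omega
  have h_unit : IsUnit (v i) := Int.isUnit_iff_natAbs_eq.2 (by omega)
  refine ⟨(i, h_unit.unit), funext fun j => ?_⟩
  rcases eq_or_ne j i with rfl | hj
  · simp [unitStep]
  · simpa [unitStep, hj] using Finset.sum_eq_zero_iff.1 h_off j (by simp [hj])

lemma norm_le_one_of_lone_eq_one {v : Fin d → ℤ} (h : lone v = 1) : ‖v‖ ≤ 1 := by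
  have h_linf : linf v ≤ lone v := Finset.sup_le fun i hi =>
    Finset.single_le_sum (f := fun i => (v i).natAbs) (fun _ _ => Nat.zero_le _) hi
  rw [← natCast_linf]
  exact_mod_cast h ▸ h_linf

lemma norm_sub_eq_of_mem_intBdry_ballZ {x y : Fin d → ℤ} {r : ℕ} (h : y ∈ intBdry (ballZ x r)) :
    ‖y - x‖ = r := by
  obtain ⟨hy, y', h_step, hy'⟩ := h
  refine le_antisymm (mem_ballZ_iff.1 hy) ?_
  have h_out : (r : ℝ) + 1 ≤ ‖y' - x‖ := by
    rw [mem_ballZ_iff, ← natCast_linf, Nat.cast_le, not_le] at hy'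
    rw [← natCast_linf]
    exact_mod_cast hy'
  linarith [norm_sub_le_norm_sub_add_norm_sub y' y x, norm_le_one_of_lone_eq_one h_step]

end Norms

/-! ### Superharmonic functions and hitting probabilities -/

section Hitting

variable {d : ℕ}

/-- Superharmonicity for the simple random walk, multiplied by the number `2d` of neighbours. -/
def IsSuperharmonic (F : (Fin d → ℤ) → ℝ) : Prop :=
  ∀ x, ∑ s, F (x + unitStep s) ≤ 2 * d * F x

lemma IsSuperharmonic.const_mul {F : (Fin d → ℤ) → ℝ} (hF : IsSuperharmonic F) {a : ℝ}
    (ha : 0 ≤ a) : IsSuperharmonic fun x => a * F x := fun x => by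
  rw [← Finset.mul_sum, mul_left_comm]
  exact mul_le_mul_of_nonneg_left (hF x) ha

lemma IsSuperharmonic.comp_sub_right {F : (Fin d → ℤ) → ℝ} (hF : IsSuperharmonic F)
    (c : Fin d → ℤ) : IsSuperharmonic fun x => F (x - c) := fun x => by
  simpa only [add_sub_right_comm] using hF (x - c)

lemma IsSuperharmonic.sum_inv_mul_ofReal_le {F : (Fin d → ℤ) → ℝ} (hF : IsSuperharmonic F)
    (hF₀ : ∀ x, 0 ≤ F x) (x : Fin d → ℤ) :
    ∑ s, (2 * d : ℝ≥0∞)⁻¹ * ENNReal.ofReal (F (x + unitStep s)) ≤ ENNReal.ofReal (F x) := by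
  calc ∑ s, (2 * d : ℝ≥0∞)⁻¹ * ENNReal.ofReal (F (x + unitStep s))
      = (2 * d : ℝ≥0∞)⁻¹ * ENNReal.ofReal (∑ s, F (x + unitStep s)) := by
        rw [← Finset.mul_sum, ENNReal.ofReal_sum_of_nonneg fun s _ => hF₀ _]
    _ ≤ (2 * d : ℝ≥0∞)⁻¹ * ENNReal.ofReal (2 * d * F x) := by
        gcongr
        exact hF x
    _ = (2 * d : ℝ≥0∞)⁻¹ * (2 * d) * ENNReal.ofReal (F x) := by
        rw [ENNReal.ofReal_mul (by positivity), ENNReal.ofReal_mul zero_le_two,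
          ENNReal.ofReal_ofNat, ENNReal.ofReal_natCast]
        ring
    _ ≤ ENNReal.ofReal (F x) := mul_le_of_le_one_left zero_le (ENNReal.inv_mul_le_one _)

/-- The event `H_A < ∞` that a path ever visits `A`. -/
def hits {α : Type*} (A : Set α) : Set (ℕ → α) := {w | ∃ k, w k ∈ A}

/-- The paths that agree with `ρ` up to time `n`. -/
def pathCylinder {α : Type*} (ρ : ℕ → α) (n : ℕ) : Set (ℕ → α) := {w | ∀ i ≤ n, w i = ρ i}

lemma mem_pathCylinder_update {α : Type*} {ρ w : ℕ → α} {n : ℕ} (hw : w ∈ pathCylinder ρ n) :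
    w ∈ pathCylinder (Function.update ρ (n + 1) (w (n + 1))) (n + 1) := by
  intro i hi
  rcases eq_or_ne i (n + 1) with rfl | h_ne
  · rw [Function.update_self]
  · rw [Function.update_of_ne h_ne, hw i (by omega)]

namespace IsSRW

variable {P : (Fin d → ℤ) → Measure (ℕ → Fin d → ℤ)}

lemma ae_zero_eq (hP : IsSRW P) (x : Fin d → ℤ) : ∀ᵐ w ∂P x, w 0 = x := by
  have h_null : ∀ᵐ w ∂P x, ∀ z ≠ x, w ∉ pathCylinder (fun _ => z) 0 := by
    refine ae_all_iff.2 fun z => ?_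
    rcases eq_or_ne z x with rfl | hz
    · simp
    · simpa [hz, pathCylinder] using measure_eq_zero_iff_ae_notMem.1
        ((hP.2 x 0 fun _ => z).trans (if_neg fun h => hz h.1))
  filter_upwards [h_null] with w hw
  by_contra h
  exact hw _ h fun i hi => by rw [Nat.le_zero.1 hi]

lemma ae_lone_sub_eq_one (hP : IsSRW P) (x : Fin d → ℤ) (ρ : ℕ → Fin d → ℤ) (n : ℕ) :
    ∀ᵐ w ∂P x, w ∈ pathCylinder ρ n → lone (w (n + 1) - ρ n) = 1 := by
  have h_null : ∀ᵐ w ∂P x, ∀ z, lone (z - ρ n) ≠ 1 →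
      w ∉ pathCylinder (Function.update ρ (n + 1) z) (n + 1) := by
    refine ae_all_iff.2 fun z => ?_
    by_cases hz : lone (z - ρ n) = 1
    · simp [hz]
    · have h_zero : P x (pathCylinder (Function.update ρ (n + 1) z) (n + 1)) = 0 :=
        (hP.2 x _ _).trans (if_neg fun h => hz (by simpa using h.2 n n.lt_succ_self))
      filter_upwards [measure_eq_zero_iff_ae_notMem.1 h_zero] with w hw _ using hw
  filter_upwards [h_null] with w hw hwρ
  by_contra h
  exact hw _ h (mem_pathCylinder_update hwρ)

lemma measure_pathCylinder_update_le (hP : IsSRW P) (x : Fin d → ℤ) (ρ : ℕ → Fin d → ℤ) (n : ℕ)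
    (z : Fin d → ℤ) :
    P x (pathCylinder (Function.update ρ (n + 1) z) (n + 1))
      ≤ (2 * d : ℝ≥0∞)⁻¹ * P x (pathCylinder ρ n) := by
  unfold pathCylinder
  rw [hP.2, hP.2]
  split_ifs with h_long h_short
  · rw [pow_succ']
  · refine absurd ⟨by simpa using h_long.1, fun i hi => ?_⟩ h_short
    have h_step := h_long.2 i (by omega)
    rwa [Function.update_of_ne (by omega), Function.update_of_ne (by omega)] at h_step
  all_goals exact zero_le

lemma measure_pathCylinder_inter_le_sum (hP : IsSRW P) (x : Fin d → ℤ) (ρ : ℕ → Fin d → ℤ) (n : ℕ)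
    (S : Set (ℕ → Fin d → ℤ)) :
    P x (pathCylinder ρ n ∩ S) ≤
      ∑ s, P x (pathCylinder (Function.update ρ (n + 1) (ρ n + unitStep s)) (n + 1) ∩ S) := by
  refine le_trans (measure_mono_ae ?_) (measure_iUnion_fintype_le _ _)
  filter_upwards [hP.ae_lone_sub_eq_one x ρ n] with w h_step hw
  obtain ⟨s, hs⟩ := exists_unitStep_of_lone_eq_one (h_step hw.1)
  refine Set.mem_iUnion.2 ⟨s, ?_, hw.2⟩
  rw [← hs, add_sub_cancel]
  exact mem_pathCylinder_update hw.1

lemma measure_pathCylinder_inter_exists_lt_le (hP : IsSRW P) {A : Set (Fin d → ℤ)}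
    {F : (Fin d → ℤ) → ℝ} (hF₀ : ∀ x, 0 ≤ F x) (hF : IsSuperharmonic F) (hA : ∀ z ∈ A, 1 ≤ F z)
    (x : Fin d → ℤ) (m : ℕ) (ρ : ℕ → Fin d → ℤ) (n : ℕ) :
    P x (pathCylinder ρ n ∩ {w | ∃ k < m, w (n + k) ∈ A})
      ≤ P x (pathCylinder ρ n) * ENNReal.ofReal (F (ρ n)) := by
  induction m generalizing ρ n with
  | zero => simp
  | succ m ih =>
    by_cases h_mem : ρ n ∈ A
    · calc P x (pathCylinder ρ n ∩ _) ≤ P x (pathCylinder ρ n) * 1 := by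
            rw [mul_one]
            exact measure_mono Set.inter_subset_left
        _ ≤ _ := by
            gcongr
            exact ENNReal.one_le_ofReal.2 (hA _ h_mem)
    have h_later : pathCylinder ρ n ∩ {w | ∃ k < m + 1, w (n + k) ∈ A} ⊆
        pathCylinder ρ n ∩ {w | ∃ k < m, w (n + 1 + k) ∈ A} := by
      rintro w ⟨hw, k, hk, hkA⟩
      cases k with
      | zero => exact absurd (hw n le_rfl ▸ hkA) h_mem
      | succ k => exact ⟨hw, k, by omega, by rwa [add_right_comm, add_assoc]⟩
    set p := P x (pathCylinder ρ n)
    calc P x (pathCylinder ρ n ∩ {w | ∃ k < m + 1, w (n + k) ∈ A})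
        ≤ ∑ s, P x (pathCylinder (Function.update ρ (n + 1) (ρ n + unitStep s)) (n + 1) ∩
            {w | ∃ k < m, w (n + 1 + k) ∈ A}) :=
          (measure_mono h_later).trans (hP.measure_pathCylinder_inter_le_sum x ρ n _)
      _ ≤ ∑ s, (2 * d : ℝ≥0∞)⁻¹ * p * ENNReal.ofReal (F (ρ n + unitStep s)) := by
          gcongr with s
          refine (ih _ _).trans ?_
          rw [Function.update_self]
          gcongr
          exact hP.measure_pathCylinder_update_le x ρ n _
      _ = p * ∑ s, (2 * d : ℝ≥0∞)⁻¹ * ENNReal.ofReal (F (ρ n + unitStep s)) := by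
          simp only [Finset.mul_sum, mul_assoc, mul_left_comm p]
      _ ≤ p * ENNReal.ofReal (F (ρ n)) := by
          gcongr
          exact hF.sum_inv_mul_ofReal_le hF₀ _

theorem measure_hits_le (hP : IsSRW P) {A : Set (Fin d → ℤ)} {F : (Fin d → ℤ) → ℝ}
    (hF₀ : ∀ x, 0 ≤ F x) (hF : IsSuperharmonic F) (hA : ∀ z ∈ A, 1 ≤ F z) (x : Fin d → ℤ) :
    P x (hits A) ≤ ENNReal.ofReal (F x) := by
  have := hP.1 x
  have h_union : hits A = ⋃ m : ℕ, {w | ∃ k < m, w k ∈ A} := by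
    ext w
    simp only [hits, Set.mem_ofPred_eq, Set.mem_iUnion]
    exact ⟨fun ⟨k, hk⟩ => ⟨k + 1, k, k.lt_succ_self, hk⟩, fun ⟨_, k, _, hk⟩ => ⟨k, hk⟩⟩
  have h_mono : Monotone fun m : ℕ => {w : ℕ → Fin d → ℤ | ∃ k < m, w k ∈ A} :=
    fun _ _ h_le _ ⟨k, hk, hkA⟩ => ⟨k, hk.trans_le h_le, hkA⟩
  rw [h_union, h_mono.measure_iUnion]
  refine iSup_le fun m => ?_
  calc P x {w | ∃ k < m, w k ∈ A}
      ≤ P x (pathCylinder (fun _ => x) 0 ∩ {w | ∃ k < m, w (0 + k) ∈ A}) := by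
        refine measure_mono_ae ?_
        filter_upwards [hP.ae_zero_eq x] with w h_start hw
        exact ⟨fun i hi => by rw [Nat.le_zero.1 hi, h_start], hw.imp fun k hk => by rwa [zero_add]⟩
    _ ≤ P x (pathCylinder (fun _ => x) 0) * ENNReal.ofReal (F x) :=
        hP.measure_pathCylinder_inter_exists_lt_le hF₀ hF hA x m _ 0
    _ ≤ ENNReal.ofReal (F x) := mul_le_of_le_one_left zero_le prob_le_one

end IsSRW

end Hitting

/-! ### A superharmonic potential -/

section Potential

variable {d : ℕ}

lemma one_le_one_add_mul_taylor_pow_four {u : ℝ} (hu : |u| ≤ 1 / 20) :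
    1 ≤ (1 + u) * (1 - u / 4 + 3 * u ^ 2 / 16) ^ 4 := by
  obtain ⟨hu₁, hu₂⟩ := abs_le.1 hu
  have h_sq : 1 - u / 2 + 27 / 64 * u ^ 2 ≤ (1 - u / 4 + 3 * u ^ 2 / 16) ^ 2 := by
    nlinarith [sq_nonneg (u ^ 2)]
  have h_sq_nonneg : 0 ≤ 1 - u / 2 + 27 / 64 * u ^ 2 := by nlinarith
  calc 1 ≤ (1 + u) * (1 - u + 17 / 16 * u ^ 2) := by nlinarith
    _ ≤ (1 + u) * (1 - u / 2 + 27 / 64 * u ^ 2) ^ 2 := by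
        gcongr
        · linarith
        · nlinarith [sq_nonneg (u ^ 2)]
    _ ≤ (1 + u) * ((1 - u / 4 + 3 * u ^ 2 / 16) ^ 2) ^ 2 := by
        gcongr
        linarith
    _ = (1 + u) * (1 - u / 4 + 3 * u ^ 2 / 16) ^ 4 := by ring

lemma one_add_rpow_neg_quarter_le {u : ℝ} (hu : |u| ≤ 1 / 20) :
    (1 + u) ^ (-(1 / 4) : ℝ) ≤ 1 - u / 4 + 3 * u ^ 2 / 16 := by
  obtain ⟨hu₁, hu₂⟩ := abs_le.1 hu
  have h_pos : 0 < 1 + u := by linarith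
  have h_taylor : 0 ≤ 1 - u / 4 + 3 * u ^ 2 / 16 := by nlinarith
  calc (1 + u) ^ (-(1 / 4) : ℝ) = (1 + u)⁻¹ ^ (1 / 4 : ℝ) := by
        rw [Real.rpow_neg h_pos.le, Real.inv_rpow h_pos.le]
    _ ≤ ((1 - u / 4 + 3 * u ^ 2 / 16) ^ 4) ^ (1 / 4 : ℝ) := by
        gcongr
        rw [inv_le_iff_one_le_mul₀' h_pos]
        exact one_le_one_add_mul_taylor_pow_four hu
    _ = 1 - u / 4 + 3 * u ^ 2 / 16 := by
        rw [one_div]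
        exact_mod_cast Real.pow_rpow_inv_natCast h_taylor four_ne_zero

/-- The squared Euclidean norm `|x|²`, shifted so that a lattice step is a small relative change
everywhere. -/
def shiftedSqNorm (x : Fin d → ℤ) : ℝ := ∑ i, (x i : ℝ) ^ 2 + 10000

lemma le_shiftedSqNorm (x : Fin d → ℤ) : 10000 ≤ shiftedSqNorm x :=
  le_add_of_nonneg_left (by positivity)

lemma shiftedSqNorm_pos (x : Fin d → ℤ) : 0 < shiftedSqNorm x := by
  linarith [le_shiftedSqNorm x]

lemma sq_norm_le_shiftedSqNorm (x : Fin d → ℤ) : ‖x‖ ^ 2 ≤ shiftedSqNorm x := by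
  have h_norm : ‖x‖ ≤ √(shiftedSqNorm x) :=
    (pi_norm_le_iff_of_nonneg (Real.sqrt_nonneg _)).2 fun i => by
      rw [Int.norm_eq_abs]
      refine Real.abs_le_sqrt (le_add_of_le_of_nonneg ?_ (by norm_num))
      exact Finset.single_le_sum (f := fun i => (x i : ℝ) ^ 2) (fun _ _ => sq_nonneg _)
        (Finset.mem_univ i)
  calc ‖x‖ ^ 2 ≤ √(shiftedSqNorm x) ^ 2 := by gcongr
    _ = shiftedSqNorm x := Real.sq_sqrt (shiftedSqNorm_pos x).le

lemma shiftedSqNorm_le_of_norm_le {x : Fin d → ℤ} {r : ℝ} (h : ‖x‖ ≤ r) :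
    shiftedSqNorm x ≤ d * r ^ 2 + 10000 := by
  have h_coord (i : Fin d) : (x i : ℝ) ^ 2 ≤ r ^ 2 :=
    sq_le_sq.2 <| (Int.norm_eq_abs (x i) ▸ norm_le_pi_norm x i).trans (h.trans (le_abs_self r))
  simpa [shiftedSqNorm] using Finset.sum_le_sum fun i (_ : i ∈ Finset.univ) => h_coord i

/-- The change of `|x|²` when the walk makes the step `s`. -/
def sqNormIncrement (x : Fin d → ℤ) (s : Fin d × ℤˣ) : ℝ := 1 + 2 * s.2 * x s.1

lemma shiftedSqNorm_add_unitStep (x : Fin d → ℤ) (s : Fin d × ℤˣ) :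
    shiftedSqNorm (x + unitStep s) = shiftedSqNorm x + sqNormIncrement x s := by
  obtain ⟨i, u⟩ := s
  have h_unit : ((u : ℤ) : ℝ) ^ 2 = 1 := by
    rcases Int.units_eq_one_or u with rfl | rfl <;> simp
  have h_coord (j : Fin d) : (((x + unitStep (i, u)) j : ℤ) : ℝ) ^ 2 =
      (x j : ℝ) ^ 2 + if j = i then sqNormIncrement x (i, u) else 0 := by
    rcases eq_or_ne j i with rfl | hj
    · simp only [unitStep, sqNormIncrement, Pi.add_apply, Pi.single_eq_same, Int.cast_add, if_true]
      linear_combination h_unit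
    · simp [unitStep, hj]
  simp only [shiftedSqNorm, h_coord, Finset.sum_add_distrib, Finset.sum_ite_eq', Finset.mem_univ,
    if_true]
  ring

lemma sum_sqNormIncrement (x : Fin d → ℤ) : ∑ s, sqNormIncrement x s = 2 * d := by
  have h_coord (i : Fin d) : ∑ u, sqNormIncrement x (i, u) = 2 := by
    rw [UnitsInt.univ, Finset.sum_pair (by decide)]
    simp only [sqNormIncrement, Units.val_neg, Units.val_one, Int.cast_neg, Int.cast_one]
    ring
  rw [Fintype.sum_prod_type, Finset.sum_congr rfl fun i _ => h_coord i]
  simp [mul_comm]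

lemma sum_sq_sqNormIncrement (x : Fin d → ℤ) :
    ∑ s, sqNormIncrement x s ^ 2 = 2 * d + 8 * ∑ i, (x i : ℝ) ^ 2 := by
  have h_coord (i : Fin d) : ∑ u, sqNormIncrement x (i, u) ^ 2 = 2 + 8 * (x i : ℝ) ^ 2 := by
    rw [UnitsInt.univ, Finset.sum_pair (by decide)]
    simp only [sqNormIncrement, Units.val_neg, Units.val_one, Int.cast_neg, Int.cast_one]
    ring
  rw [Fintype.sum_prod_type, Finset.sum_congr rfl fun i _ => h_coord i, Finset.sum_add_distrib,
    ← Finset.mul_sum]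
  simp [mul_comm]

lemma abs_sqNormIncrement_le (x : Fin d → ℤ) (s : Fin d × ℤˣ) :
    |sqNormIncrement x s| ≤ shiftedSqNorm x / 20 := by
  have h_large := le_shiftedSqNorm x
  have h_coord : |(x s.1 : ℝ)| ≤ ‖x‖ := Int.norm_eq_abs (x s.1) ▸ norm_le_pi_norm x s.1
  have h_norm : ‖x‖ ≤ shiftedSqNorm x / 100 := by
    refine abs_le_of_sq_le_sq' ?_ (by positivity) |>.2
    nlinarith [sq_norm_le_shiftedSqNorm x]
  have h_unit : |((s.2 : ℤ) : ℝ)| = 1 := by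
    exact_mod_cast Int.isUnit_iff_abs_eq.1 s.2.isUnit
  calc |sqNormIncrement x s| ≤ |(1 : ℝ)| + |2 * ((s.2 : ℤ) : ℝ) * x s.1| := abs_add_le _ _
    _ = 1 + 2 * |(x s.1 : ℝ)| := by simp [abs_mul, h_unit]
    _ ≤ shiftedSqNorm x / 20 := by linarith

/-- The function `(|x|² + 10000)^(-1/4)`, which decays like `|x|^(-1/2)`. -/
noncomputable def potential (x : Fin d → ℤ) : ℝ := shiftedSqNorm x ^ (-(1 / 4) : ℝ)

lemma potential_nonneg (x : Fin d → ℤ) : 0 ≤ potential x :=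
  Real.rpow_nonneg (shiftedSqNorm_pos x).le _

lemma potential_add_unitStep_le (x : Fin d → ℤ) (s : Fin d × ℤˣ) :
    potential (x + unitStep s) ≤ potential x * (1 - sqNormIncrement x s / shiftedSqNorm x / 4 +
      3 * (sqNormIncrement x s / shiftedSqNorm x) ^ 2 / 16) := by
  have h_pos := shiftedSqNorm_pos x
  have h_small : |sqNormIncrement x s / shiftedSqNorm x| ≤ 1 / 20 := by
    rw [abs_div, abs_of_pos h_pos, div_le_iff₀ h_pos]
    linarith [abs_sqNormIncrement_le x s]
  have h_factor : shiftedSqNorm (x + unitStep s) =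
      shiftedSqNorm x * (1 + sqNormIncrement x s / shiftedSqNorm x) := by
    rw [shiftedSqNorm_add_unitStep]
    field_simp
  rw [potential, h_factor, Real.mul_rpow h_pos.le (by linarith [(abs_le.1 h_small).1])]
  exact mul_le_mul_of_nonneg_left (one_add_rpow_neg_quarter_le h_small) (potential_nonneg x)

theorem isSuperharmonic_potential (hd : 3 ≤ d) :
    IsSuperharmonic (potential : (Fin d → ℤ) → ℝ) := by
  intro x
  set S := shiftedSqNorm x with hS
  have h_large : 10000 ≤ S := le_shiftedSqNorm x
  have h_sq_sum : ∑ i, (x i : ℝ) ^ 2 = S - 10000 := by rw [hS, shiftedSqNorm, add_sub_cancel_right]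
  have hd' : (3 : ℝ) ≤ d := by exact_mod_cast hd
  calc ∑ s, potential (x + unitStep s)
      ≤ ∑ s, potential x * (1 - sqNormIncrement x s / S / 4 +
          3 * (sqNormIncrement x s / S) ^ 2 / 16) :=
        Finset.sum_le_sum fun s _ => potential_add_unitStep_le x s
    _ = potential x * (2 * d - 2 * d / S / 4 + 3 * ((2 * d + 8 * (S - 10000)) / S ^ 2) / 16) := by
        simp only [← Finset.mul_sum, Finset.sum_add_distrib, Finset.sum_sub_distrib,
          ← Finset.sum_div, div_pow, sum_sqNormIncrement, sum_sq_sqNormIncrement, h_sq_sum]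
        simp [mul_comm]
    _ ≤ potential x * (2 * d) := by
        gcongr
        · exact potential_nonneg x
        have h_drift : 0 ≤ (d * S / 2 - 3 / 8 * d - 3 / 2 * (S - 10000)) / S ^ 2 :=
          div_nonneg (by nlinarith) (sq_nonneg S)
        have h_diff : 2 * d - (2 * d - 2 * d / S / 4 + 3 * ((2 * d + 8 * (S - 10000)) / S ^ 2) / 16)
            = (d * S / 2 - 3 / 8 * d - 3 / 2 * (S - 10000)) / S ^ 2 := by
          field_simp
          ring
        linarith
    _ = 2 * d * potential x := mul_comm _ _

theorem IsSRW.measure_hits_ballZ_le (hd : 3 ≤ d)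
    {P : (Fin d → ℤ) → Measure (ℕ → Fin d → ℤ)} (hP : IsSRW P) (c y : Fin d → ℤ) {r : ℕ}
    (hr : 1 ≤ r) {R : ℝ} (hR : 0 < R) (hRy : R ≤ ‖y - c‖) :
    P y (hits (ballZ c r)) ≤ ENNReal.ofReal ((d + 10000) ^ (1 / 4 : ℝ) * √(r / R)) := by
  set B : ℝ := d * r ^ 2 + 10000
  have hr' : (1 : ℝ) ≤ r := by exact_mod_cast hr
  have h_one_le : ∀ z ∈ ballZ c r, 1 ≤ B ^ (1 / 4 : ℝ) * potential (z - c) := by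
    intro z hz
    have h_pos := shiftedSqNorm_pos (z - c)
    rw [potential, Real.rpow_neg h_pos.le, ← div_eq_mul_inv,
      one_le_div (Real.rpow_pos_of_pos h_pos _)]
    gcongr
    exact shiftedSqNorm_le_of_norm_le (mem_ballZ_iff.1 hz)
  have h_pos := shiftedSqNorm_pos (y - c)
  have h_nonneg (x : Fin d → ℤ) : 0 ≤ B ^ (1 / 4 : ℝ) * potential (x - c) :=
    mul_nonneg (by positivity) (potential_nonneg _)
  refine (hP.measure_hits_le h_nonneg
    (((isSuperharmonic_potential hd).comp_sub_right c).const_mul (by positivity))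
    h_one_le y).trans (ENNReal.ofReal_le_ofReal ?_)
  calc B ^ (1 / 4 : ℝ) * potential (y - c) = (B / shiftedSqNorm (y - c)) ^ (1 / 4 : ℝ) := by
        rw [potential, Real.rpow_neg h_pos.le, ← div_eq_mul_inv,
          Real.div_rpow (by positivity) h_pos.le]
    _ ≤ ((d + 10000) * (r / R) ^ 2) ^ (1 / 4 : ℝ) := by
        gcongr
        rw [div_pow, ← mul_div_assoc]
        gcongr
        · nlinarith
        · exact (pow_le_pow_left₀ hR.le hRy 2).trans (sq_norm_le_shiftedSqNorm _)
    _ = (d + 10000) ^ (1 / 4 : ℝ) * √(r / R) := by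
        rw [Real.mul_rpow (by positivity) (by positivity), Real.sqrt_eq_rpow, ← Real.rpow_natCast,
          ← Real.rpow_mul (by positivity)]
        norm_num

end Potential

/-! ### Geometry of dyadic trees -/

namespace TreeVert

/-- The restriction of a labelling of the tree to the subtree above the child `c` of the root. -/
def subtree {α : Type*} {n : ℕ} (T : TreeVert (n + 1) → α) (c : Fin 2) : TreeVert n → α :=
  fun m => T ⟨c :: m.1, Nat.succ_le_succ m.2⟩

/-- The union of the events attached to the leaves of the tree. -/
def leafUnion {Ω : Type*} {n : ℕ} (U : TreeVert n → Set Ω) : Set Ω :=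
  ⋃ (m : TreeVert n) (_ : m.1.length = n), U m

/-- For two leaves, the height above the leaf level of their last common ancestor; the leaves `m`
with `branchHeight m m₀ = k` form the shell `S_k` around the leaf `m₀`. -/
def branchHeight : List (Fin 2) → List (Fin 2) → ℕ
  | a :: p, b :: q => if a = b then branchHeight p q else p.length + 1
  | _, _ => 0

section Events

variable {Ω : Type*} {n : ℕ}

lemma leafUnion_subset_of_zero {U : TreeVert 0 → Set Ω} {m₀ : TreeVert 0} :
    leafUnion U ⊆ U m₀ := by
  refine Set.iUnion₂_subset fun m hm => ?_
  rw [Subtype.ext (a1 := m) (a2 := m₀)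
    ((List.length_eq_zero_iff.1 hm).trans (List.length_eq_zero_iff.1 (Nat.le_zero.1 m₀.2)).symm)]

lemma leafUnion_succ_subset (U : TreeVert (n + 1) → Set Ω) {a b : Fin 2} (hab : a ≠ b) :
    leafUnion U ⊆ leafUnion (subtree U a) ∪ leafUnion (subtree U b) := by
  refine Set.iUnion₂_subset fun ⟨m, hmn⟩ hm => ?_
  obtain ⟨c, p, rfl⟩ := List.exists_of_length_succ m hm
  have h_sub : U ⟨c :: p, hmn⟩ ⊆ leafUnion (subtree U c) :=
    Set.subset_iUnion₂_of_subset ⟨p, Nat.le_of_succ_le_succ hmn⟩ (Nat.succ_injective hm) subset_rfl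
  have h_two : c = a ∨ c = b := by omega
  rcases h_two with rfl | rfl
  · exact h_sub.trans Set.subset_union_left
  · exact h_sub.trans Set.subset_union_right

variable [MeasurableSpace Ω] (μ : Measure Ω)

lemma measure_leafUnion_le {U : TreeVert n → Set Ω} {b : ℝ≥0∞}
    (hU : ∀ m : TreeVert n, m.1.length = n → μ (U m) ≤ b) : μ (leafUnion U) ≤ 2 ^ n * b := by
  induction n with
  | zero =>
    simpa using (measure_mono leafUnion_subset_of_zero).trans (hU ⟨[], le_rfl⟩ rfl)
  | succ n ih =>
    have h_sub (c : Fin 2) : μ (leafUnion (subtree U c)) ≤ 2 ^ n * b :=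
      ih fun m hm => hU _ (congrArg Nat.succ hm)
    calc μ (leafUnion U) ≤ μ (leafUnion (subtree U 0)) + μ (leafUnion (subtree U 1)) :=
          (measure_mono (leafUnion_succ_subset U zero_ne_one)).trans (measure_union_le _ _)
      _ ≤ 2 ^ n * b + 2 ^ n * b := add_le_add (h_sub 0) (h_sub 1)
      _ = 2 ^ (n + 1) * b := by ring

lemma measure_leafUnion_le_sum_shells {U : TreeVert n → Set Ω} {m₀ : TreeVert n}
    (hm₀ : m₀.1.length = n) {a : ℝ≥0∞} {f : ℕ → ℝ≥0∞} (ha : μ (U m₀) ≤ a)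
    (hf : ∀ (m : TreeVert n) (k : ℕ), m.1.length = n → branchHeight m.1 m₀.1 = k + 1 →
      μ (U m) ≤ f k) :
    μ (leafUnion U) ≤ a + ∑ k ∈ Finset.range n, 2 ^ k * f k := by
  induction n with
  | zero => simpa using (measure_mono leafUnion_subset_of_zero).trans ha
  | succ n ih =>
    obtain ⟨m₀, hm₀n⟩ := m₀
    obtain ⟨c, p, rfl⟩ := List.exists_of_length_succ m₀ hm₀
    obtain ⟨c', hc'⟩ : ∃ c' : Fin 2, c' ≠ c := exists_ne c
    have h_near : μ (leafUnion (subtree U c)) ≤ a + ∑ k ∈ Finset.range n, 2 ^ k * f k :=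
      ih (m₀ := ⟨p, Nat.le_of_succ_le_succ hm₀n⟩) (Nat.succ_injective hm₀) ha
        fun m k hm hk => hf _ k (congrArg Nat.succ hm) (by simpa [branchHeight] using hk)
    have h_far : μ (leafUnion (subtree U c')) ≤ 2 ^ n * f n :=
      measure_leafUnion_le μ fun m hm =>
        hf _ n (congrArg Nat.succ hm) (by simp [branchHeight, hc', hm])
    calc μ (leafUnion U) ≤ μ (leafUnion (subtree U c)) + μ (leafUnion (subtree U c')) :=
          (measure_mono (leafUnion_succ_subset U hc'.symm)).trans (measure_union_le _ _)
      _ ≤ a + ∑ k ∈ Finset.range n, 2 ^ k * f k + 2 ^ n * f n := add_le_add h_near h_far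
      _ = a + ∑ k ∈ Finset.range (n + 1), 2 ^ k * f k := by
          rw [Finset.sum_range_succ, add_assoc]

end Events

section Embeddings

variable {E : Type*} [SeminormedAddCommGroup E] {n : ℕ}

/-- The step condition of `Λ_n` for arbitrary scales: the child `i` of a vertex at height `k` above
the leaf level lies at distance `L k` (`i = 0`) or `2 L k` (`i = 1`) from that vertex. -/
def HasDyadicSteps (L : ℕ → ℝ) (T : TreeVert n → E) : Prop :=
  ∀ (m : TreeVert n) (hm : m.1.length < n) (i : Fin 2),
    ‖T ⟨m.1 ++ [i], by simpa using hm⟩ - T m‖ = (i.1 + 1) * L (n - m.1.length)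

namespace HasDyadicSteps

variable {L : ℕ → ℝ}

lemma subtree {T : TreeVert (n + 1) → E} (hT : HasDyadicSteps L T) (c : Fin 2) :
    HasDyadicSteps L (TreeVert.subtree T c) := fun m hm i => by
  simpa [TreeVert.subtree] using hT ⟨c :: m.1, Nat.succ_le_succ m.2⟩ (Nat.succ_lt_succ hm) i

lemma norm_child_sub_root {T : TreeVert (n + 1) → E} (hT : HasDyadicSteps L T) (c : Fin 2) :
    ‖TreeVert.subtree T c ⟨[], n.zero_le⟩ - T ⟨[], (n + 1).zero_le⟩‖ = (c.1 + 1) * L (n + 1) :=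
  hT ⟨[], (n + 1).zero_le⟩ n.succ_pos c

lemma le_norm_child_sub_child {T : TreeVert (n + 1) → E} (hT : HasDyadicSteps L T)
    {a b : Fin 2} (hab : a ≠ b) :
    L (n + 1) ≤ ‖TreeVert.subtree T a ⟨[], n.zero_le⟩ - TreeVert.subtree T b ⟨[], n.zero_le⟩‖ := by
  wlog h_lt : b < a generalizing a b
  · rw [norm_sub_rev]
    exact this hab.symm (hab.lt_or_gt.resolve_right h_lt)
  obtain ⟨rfl, rfl⟩ : b = 0 ∧ a = 1 := by omega
  have h_zero := hT.norm_child_sub_root 0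
  have h_one := hT.norm_child_sub_root 1
  have h_tri := norm_sub_le_norm_sub_add_norm_sub (TreeVert.subtree T 1 ⟨[], n.zero_le⟩)
    (TreeVert.subtree T 0 ⟨[], n.zero_le⟩) (T ⟨[], (n + 1).zero_le⟩)
  simp only [Fin.val_zero, Fin.val_one, Nat.cast_zero, Nat.cast_one] at h_zero h_one
  linarith

lemma norm_leaf_sub_root_le {T : TreeVert n → E} (hT : HasDyadicSteps L T) (hL₀ : 0 ≤ L 0)
    (hL : ∀ k, 2 * L k ≤ L (k + 1)) {m : TreeVert n} (hm : m.1.length = n) :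
    ‖T m - T ⟨[], n.zero_le⟩‖ ≤ 4 * L n := by
  induction n with
  | zero =>
    obtain rfl : m = ⟨[], le_rfl⟩ := Subtype.ext (List.length_eq_zero_iff.1 hm)
    simpa using hL₀
  | succ n ih =>
    obtain ⟨m, hmn⟩ := m
    obtain ⟨c, p, rfl⟩ := List.exists_of_length_succ m hm
    have h_child : ‖TreeVert.subtree T c ⟨[], n.zero_le⟩ - T ⟨[], (n + 1).zero_le⟩‖
        ≤ 2 * L (n + 1) := by
      have h_nonneg : 0 ≤ L (n + 1) := by
        have := (norm_nonneg _).trans_eq (hT.norm_child_sub_root 0)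
        simpa using this
      rw [hT.norm_child_sub_root]
      gcongr
      have : (c.1 : ℝ) ≤ 1 := by exact_mod_cast Nat.le_of_lt_succ c.2
      linarith
    have h_leaf := ih (hT.subtree c) (m := ⟨p, Nat.le_of_succ_le_succ hmn⟩) (Nat.succ_injective hm)
    have h_tri := norm_sub_le_norm_sub_add_norm_sub (T ⟨c :: p, hmn⟩)
      (TreeVert.subtree T c ⟨[], n.zero_le⟩) (T ⟨[], (n + 1).zero_le⟩)
    simp only [TreeVert.subtree] at h_tri h_leaf h_child
    linarith [hL n]

lemma le_norm_leaf_sub_leaf {T : TreeVert n → E} (hT : HasDyadicSteps L T) (hL₀ : 0 ≤ L 0)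
    (hL : ∀ k, 2 * L k ≤ L (k + 1)) {m m₀ : TreeVert n} (hm : m.1.length = n)
    (hm₀ : m₀.1.length = n) {k : ℕ} (hk : branchHeight m.1 m₀.1 = k + 1) :
    L (k + 1) - 8 * L k ≤ ‖T m - T m₀‖ := by
  induction n with
  | zero => simp [List.length_eq_zero_iff.1 hm, branchHeight] at hk
  | succ n ih =>
    obtain ⟨⟨m, hmn⟩, ⟨m₀, hm₀n⟩⟩ := m, m₀
    obtain ⟨a, p, rfl⟩ := List.exists_of_length_succ m hm
    obtain ⟨b, q, rfl⟩ := List.exists_of_length_succ m₀ hm₀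
    have hp : p.length = n := Nat.succ_injective hm
    have hq : q.length = n := Nat.succ_injective hm₀
    rcases eq_or_ne a b with rfl | hab
    · exact ih (hT.subtree a) (m := ⟨p, hp.le⟩) (m₀ := ⟨q, hq.le⟩) hp hq
        (by simpa [branchHeight] using hk)
    · obtain rfl : n = k := by simpa [branchHeight, hab, hp] using hk
      have h_children := hT.le_norm_child_sub_child hab
      have h_m := (hT.subtree a).norm_leaf_sub_root_le hL₀ hL (m := ⟨p, hp.le⟩) hp
      have h_m₀ := (hT.subtree b).norm_leaf_sub_root_le hL₀ hL (m := ⟨q, hq.le⟩) hq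
      have h_tri := dist_triangle4 (TreeVert.subtree T a ⟨[], n.zero_le⟩)
        (T ⟨a :: p, hmn⟩) (T ⟨b :: q, hm₀n⟩) (TreeVert.subtree T b ⟨[], n.zero_le⟩)
      rw [norm_sub_rev] at h_m
      simp only [dist_eq_norm, TreeVert.subtree] at h_tri h_children h_m h_m₀ ⊢
      linarith

end HasDyadicSteps

end Embeddings

end TreeVert

/-! ### Hitting the leaves of a dyadic tree -/

lemma add_sum_two_pow_mul_pow_succ_le {θ : ℝ≥0∞} (hθ : θ ≤ 4⁻¹) (n : ℕ) :
    θ + ∑ k ∈ Finset.range n, 2 ^ k * θ ^ (k + 1) ≤ 3 * θ := by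
  have h_ratio : 2 * θ ≤ 2⁻¹ := by
    calc 2 * θ ≤ 2 * 4⁻¹ := by gcongr
      _ = 2⁻¹ := by
          rw [show (4 : ℝ≥0∞) = 2 * 2 by norm_num, ENNReal.mul_inv (by simp) (by simp), ← mul_assoc,
            ENNReal.mul_inv_cancel two_ne_zero ENNReal.ofNat_ne_top, one_mul]
  have h_geom : ∑ k ∈ Finset.range n, (2 * θ) ^ k ≤ 2 := by
    calc ∑ k ∈ Finset.range n, (2 * θ) ^ k ≤ ∑ k ∈ Finset.range n, 2⁻¹ ^ k := by gcongr
      _ ≤ ∑' k, 2⁻¹ ^ k := ENNReal.sum_le_tsum _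
      _ = 2 := by rw [ENNReal.tsum_geometric, ENNReal.one_sub_inv_two, inv_inv]
  calc θ + ∑ k ∈ Finset.range n, 2 ^ k * θ ^ (k + 1)
      = (1 + ∑ k ∈ Finset.range n, (2 * θ) ^ k) * θ := by
        rw [add_mul, one_mul, Finset.sum_mul]
        simp only [mul_pow, pow_succ, mul_assoc]
    _ ≤ (1 + 2) * θ := by gcongr
    _ = 3 * θ := by norm_num

lemma sqrt_div_mul_pow_div_nine {L₀ l : ℝ} (hL₀ : 0 < L₀) (hl : 0 ≤ l) (k : ℕ) :
    √(L₀ / (L₀ * l ^ k / 9)) = 3 * (√l)⁻¹ ^ k := by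
  rw [← Real.sqrt_sq (show 0 ≤ 3 * (√l)⁻¹ ^ k by positivity)]
  congr 1
  rw [mul_pow, ← pow_mul, mul_comm k, pow_mul, inv_pow, Real.sq_sqrt hl, div_div_eq_mul_div,
    mul_div_mul_left _ _ hL₀.ne', inv_pow]
  ring

section Leaves

open TreeVert

variable {n : ℕ}

lemma le_norm_sub_leaf {E : Type*} [SeminormedAddCommGroup E] {T : TreeVert n → E} {L₀ l : ℝ}
    (hL₀ : 0 ≤ L₀) (hl : 64 ≤ l) (hT : HasDyadicSteps (fun k => L₀ * l ^ k) T) {m m₀ : TreeVert n}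
    (hm : m.1.length = n) (hm₀ : m₀.1.length = n) {y : E} (hy : ‖y - T m₀‖ ≤ L₀ * l / 4) {k : ℕ}
    (hk : branchHeight m.1 m₀.1 = k + 1) : L₀ * l ^ (k + 1) / 9 ≤ ‖y - T m‖ := by
  have h_growth (k : ℕ) : 64 * (L₀ * l ^ k) ≤ L₀ * l ^ (k + 1) := by
    rw [pow_succ', mul_left_comm]
    gcongr
  have h_scale : L₀ * l ≤ L₀ * l ^ (k + 1) := by
    gcongr
    exact le_self_pow₀ (by linarith) k.succ_ne_zero
  have h_nonneg (k : ℕ) : 0 ≤ L₀ * l ^ k := by positivity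
  have h_leaves := hT.le_norm_leaf_sub_leaf (h_nonneg 0)
    (fun k => by linarith [h_growth k, h_nonneg k]) hm hm₀ hk
  have h_tri := norm_sub_le_norm_sub_add_norm_sub (T m) y (T m₀)
  rw [norm_sub_rev (T m) y] at h_tri
  linarith [h_growth k, h_nonneg (k + 1)]

theorem measure_leafUnion_le_of_sqrt_decay {Ω E : Type*} [MeasurableSpace Ω] (μ : Measure Ω)
    [SeminormedAddCommGroup E] {U : TreeVert n → Set Ω} {T : TreeVert n → E} {L₀ l K : ℝ}
    (hL₀ : 0 < L₀) (hl : 64 ≤ l) (hK : 0 ≤ K) (hT : HasDyadicSteps (fun k => L₀ * l ^ k) T) {y : E}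
    (hU : ∀ m : TreeVert n, m.1.length = n → ∀ R, 0 < R → R ≤ ‖y - T m‖ →
      μ (U m) ≤ ENNReal.ofReal (K * √(L₀ / R)))
    {m₀ : TreeVert n} (hm₀ : m₀.1.length = n) (hy_far : L₀ * l / 9 ≤ ‖y - T m₀‖)
    (hy_near : ‖y - T m₀‖ ≤ L₀ * l / 4) :
    μ (leafUnion U) ≤ ENNReal.ofReal (9 * K / √l) := by
  set θ := ENNReal.ofReal (√l)⁻¹
  set β := ENNReal.ofReal (3 * K)
  have h_leaf {m : TreeVert n} (hm : m.1.length = n) (k : ℕ)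
      (h_dist : L₀ * l ^ k / 9 ≤ ‖y - T m‖) : μ (U m) ≤ β * θ ^ k := by
    refine (hU m hm _ (by positivity) h_dist).trans_eq ?_
    rw [sqrt_div_mul_pow_div_nine hL₀ (by linarith), mul_left_comm, ← mul_assoc,
      ENNReal.ofReal_mul (by positivity), ENNReal.ofReal_pow (by positivity)]
  have hθ : θ ≤ 4⁻¹ := by
    rw [← ENNReal.ofReal_ofNat 4, ← ENNReal.ofReal_inv_of_pos (by norm_num)]
    refine ENNReal.ofReal_le_ofReal (inv_anti₀ (by norm_num) (Real.le_sqrt_of_sq_le ?_))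
    linarith
  calc μ (leafUnion U) ≤ β * θ + ∑ k ∈ Finset.range n, 2 ^ k * (β * θ ^ (k + 1)) := by
        refine measure_leafUnion_le_sum_shells μ hm₀ ?_ fun m k hm hk => ?_
        · simpa only [pow_one] using h_leaf hm₀ 1 (by rwa [pow_one])
        · exact h_leaf hm (k + 1) (le_norm_sub_leaf hL₀.le hl hT hm hm₀ hy_near hk)
    _ = β * (θ + ∑ k ∈ Finset.range n, 2 ^ k * θ ^ (k + 1)) := by
        simp only [mul_add, Finset.mul_sum, mul_left_comm β]
    _ ≤ β * (3 * θ) := by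
        gcongr
        exact add_sum_two_pow_mul_pow_succ_le hθ n
    _ = ENNReal.ofReal (9 * K / √l) := by
        rw [← ENNReal.ofReal_ofNat 3, ← ENNReal.ofReal_mul (by norm_num),
          ← ENNReal.ofReal_mul (by positivity)]
        congr 1
        ring

end Leaves

lemma hasDyadicSteps_of_mem_Lam {d n L₀ l : ℕ} {T : TreeVert n → Fin d → ℤ}
    (hT : T ∈ Lam d n L₀ l) : TreeVert.HasDyadicSteps (fun k => (L₀ : ℝ) * l ^ k) T :=
  fun m hm i => by
    rw [← natCast_linf, hT.2.2 m hm i]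
    push_cast
    rfl

theorem hitting_of_tree_cores_general (d : ℕ) (hd : 3 ≤ d) {ε : ℝ} (hε : 0 < ε) :
    ∃ C : ℕ, ∀ l : ℕ, C ≤ l → ∀ L₀ : ℕ, 1 ≤ L₀ → ∀ n : ℕ, ∀ T : TreeVert n → Fin d → ℤ,
      TreeVert.HasDyadicSteps (fun k => (L₀ : ℝ) * l ^ k) T →
        ∀ P : (Fin d → ℤ) → Measure (ℕ → Fin d → ℤ), IsSRW P →
          ∀ y ∈ ⋃ (m : TreeVert n) (_ : m.1.length = n), intBdry (ballZ (T m) (L₀ * l / 4)),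
            (P y (hits (⋃ (m : TreeVert n) (_ : m.1.length = n),
              intBdry (ballZ (T m) L₀)))).toReal ≤ ε := by
  set K : ℝ := (d + 10000) ^ (1 / 4 : ℝ)
  have h_small : ∀ᶠ l : ℕ in Filter.atTop, 64 ≤ l ∧ 9 * K / √l ≤ ε :=
    (Filter.eventually_ge_atTop 64).and <| ((Real.tendsto_sqrt_atTop.comp
      tendsto_natCast_atTop_atTop).const_div_atTop (9 * K)).eventually_le_const hε
  obtain ⟨C, hC⟩ := Filter.eventually_atTop.1 h_small
  refine ⟨C, fun l hl L₀ hL₀ n T hT P hP y hy => ?_⟩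
  obtain ⟨hl₆₄, h_bound⟩ := hC l hl
  obtain ⟨m₀, hm₀, hy⟩ := Set.mem_iUnion₂.1 hy
  have h_norm := norm_sub_eq_of_mem_intBdry_ballZ hy
  have h_hits : hits (⋃ (m : TreeVert n) (_ : m.1.length = n), intBdry (ballZ (T m) L₀)) ⊆
      TreeVert.leafUnion fun m => hits (ballZ (T m) L₀) := by
    rintro w ⟨k, hk⟩
    obtain ⟨m, hm, h_mem⟩ := Set.mem_iUnion₂.1 hk
    exact Set.mem_iUnion₂.2 ⟨m, hm, k, h_mem.1⟩
  refine ENNReal.toReal_le_of_le_ofReal hε.le ((measure_mono h_hits).trans <|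
    (measure_leafUnion_le_of_sqrt_decay (P y) (by exact_mod_cast hL₀) (by exact_mod_cast hl₆₄)
      (by positivity) hT (fun m _ R hR hRy => hP.measure_hits_ballZ_le hd (T m) y hL₀ hR hRy)
      hm₀ ?_ ?_).trans (ENNReal.ofReal_le_ofReal h_bound))
  · have h_floor : L₀ * l ≤ (L₀ * l / 4) * 9 := by
      have : 64 ≤ L₀ * l := by nlinarith
      omega
    rw [h_norm, div_le_iff₀ (by norm_num)]
    exact_mod_cast h_floor
  · rw [h_norm]
    exact_mod_cast Nat.cast_div_le (α := ℝ) (m := L₀ * l) (n := 4)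

/-- For every leaf `x' ∈ 𝒯(T_{(n)})` put `C_{x'} = ∂_int B(x', L₀)` and take the unions
`C_𝒯 = ∪ C_{x'}`, `D_𝒯 = ∪ ∂_int B(x', L₁/4)`; then for all `l` at least a dimension-dependent
constant, `sup_{y ∈ D_𝒯} P_y[H_{C_𝒯} < ∞] ≤ 1/(2e)`. -/
theorem hitting_of_tree_cores (d : ℕ) (hd : 3 ≤ d) :
    ∃ C : ℕ, ∀ l : ℕ, C ≤ l → ∀ L₀ : ℕ, 1 ≤ L₀ → ∀ n : ℕ,
      ∀ T ∈ Lam d n L₀ l,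
        ∀ P : (Fin d → ℤ) → Measure (ℕ → Fin d → ℤ), IsSRW P →
          ∀ y ∈ ⋃ (m : TreeVert n) (_ : m.1.length = n),
              intBdry (ballZ (T m) (L₀ * l / 4)),
            (P y {w | ∃ k : ℕ, w k ∈
                ⋃ (m : TreeVert n) (_ : m.1.length = n), intBdry (ballZ (T m) L₀)}).toReal
              ≤ 1 / (2 * Real.exp 1) := by
  obtain ⟨C, hC⟩ := hitting_of_tree_cores_general d hd (ε := 1 / (2 * Real.exp 1)) (by positivity)
  exact ⟨C, fun l hl L₀ hL₀ n T hT => hC l hl L₀ hL₀ n T (hasDyadicSteps_of_mem_Lam hT)⟩
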